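/- arXiv:1010.3492 — 2 statements merged into one kernel-verified Lean document; each statement's English description precedes it below -/
import Mathlib

section
/- Let α ∈ ℂ, b ∈ ℝ, i = √(−1), and let x_i, J_i be the spherical realization on the domain 0 < θ < π/2 (so that x₃ = cos θ > 0 and sin θ ≠ 0). Define the (complex-valued) Goryachev integrals H₁ = J₁² + J₂² + (4/3)J₃² + 2iα x₁ x₃^{−2/3} − b x₃^{−2/3} and H₂ = (2J₃/3)·(J₁² + J₂² + (8/9)J₃² − b x₃^{−2/3}) − 2iα x₃^{1/3} J₁ + (4iα/3) x₃^{−2/3} x₁ J₃. Then {H₁, H₂} = 0 with respect to the canonical Poisson bracket. -/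
open Real Complex

/-- Partial derivative of a complex-valued function in the `i`-th coordinate
direction on `ℝ⁴` (coordinates `z 0 = φ`, `z 1 = θ`, `z 2 = p_φ`, `z 3 = p_θ`). -/
noncomputable def pdC (i : Fin 4) (F : (Fin 4 → ℝ) → ℂ) (z : Fin 4 → ℝ) : ℂ :=
  fderiv ℝ F z (Pi.single i 1)

/-- The canonical Poisson bracket, extended ℂ-bilinearly to complex-valued functions. -/
noncomputable def pbC (F G : (Fin 4 → ℝ) → ℂ) (z : Fin 4 → ℝ) : ℂ :=
  pdC 0 F z * pdC 2 G z - pdC 2 F z * pdC 0 G z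
    + pdC 1 F z * pdC 3 G z - pdC 3 F z * pdC 1 G z

noncomputable def x1 (z : Fin 4 → ℝ) : ℝ := Real.sin (z 0) * Real.sin (z 1)
noncomputable def x3 (z : Fin 4 → ℝ) : ℝ := Real.cos (z 1)
noncomputable def J1 (z : Fin 4 → ℝ) : ℝ :=
  Real.sin (z 0) * Real.cos (z 1) / Real.sin (z 1) * z 2 - Real.cos (z 0) * z 3
noncomputable def J2 (z : Fin 4 → ℝ) : ℝ :=
  Real.cos (z 0) * Real.cos (z 1) / Real.sin (z 1) * z 2 + Real.sin (z 0) * z 3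
noncomputable def J3 (z : Fin 4 → ℝ) : ℝ := -(z 2)

/-- The Goryachev Hamiltonian
`H₁ = J₁² + J₂² + (4/3)J₃² + 2iα x₁ x₃^{−2/3} − b x₃^{−2/3}`. -/
noncomputable def H1gor (α : ℂ) (b : ℝ) (z : Fin 4 → ℝ) : ℂ :=
  ((J1 z ^ 2 + J2 z ^ 2 + (4 / 3) * J3 z ^ 2 - b * x3 z ^ (-(2 : ℝ) / 3) : ℝ) : ℂ)
    + 2 * Complex.I * α * ((x1 z * x3 z ^ (-(2 : ℝ) / 3) : ℝ) : ℂ)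

/-- The Goryachev second integral
`H₂ = (2J₃/3)(J₁² + J₂² + (8/9)J₃² − b x₃^{−2/3}) − 2iα x₃^{1/3} J₁ + (4iα/3) x₃^{−2/3} x₁ J₃`. -/
noncomputable def H2gor (α : ℂ) (b : ℝ) (z : Fin 4 → ℝ) : ℂ :=
  (((2 * J3 z / 3) * (J1 z ^ 2 + J2 z ^ 2 + (8 / 9) * J3 z ^ 2
      - b * x3 z ^ (-(2 : ℝ) / 3)) : ℝ) : ℂ)
    - 2 * Complex.I * α * ((x3 z ^ ((1 : ℝ) / 3) * J1 z : ℝ) : ℂ)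
    + (4 * Complex.I * α / 3) * ((x3 z ^ (-(2 : ℝ) / 3) * x1 z * J3 z : ℝ) : ℂ)

/-!
With `a = iα`, the second integral is `H₂ = (2/3) J₃ H₁ - (8/27) J₃³ - 2a x₃^{1/3} J₁`, so

`{H₁, H₂} = (2/3) {H₁, J₃} (H₁ - (4/3) J₃²) - 2a {H₁, x₃^{1/3} J₁}`.

The `e(3)` relations give `{H₁, J₃} = -2a x₃^{-2/3} x₂`, and together with the Casimir constraint
`x₁J₁ + x₂J₂ + x₃J₃ = 0` also `{H₁, x₃^{1/3} J₁} = -(2/3) x₃^{-2/3} x₂ (H₁ - (4/3) J₃²)`, so the two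
terms cancel.
-/

/-- The coordinate `x₂ = cos φ sin θ` of the spherical realization, which occurs in the brackets of
the `J_i` with `x₁` and `x₃`. -/
noncomputable def x2 (z : Fin 4 → ℝ) : ℝ := Real.cos (z 0) * Real.sin (z 1)

section Bracket

variable {F G G' : (Fin 4 → ℝ) → ℂ} {f : (Fin 4 → ℝ) → ℝ} {z : Fin 4 → ℝ}

theorem pbC_swap (F G : (Fin 4 → ℝ) → ℂ) (z : Fin 4 → ℝ) : pbC F G z = -pbC G F z := by
  unfold pbC
  ring

theorem pbC_self (F : (Fin 4 → ℝ) → ℂ) (z : Fin 4 → ℝ) : pbC F F z = 0 := by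
  unfold pbC
  ring

theorem pbC_add_right (hG : DifferentiableAt ℝ G z) (hG' : DifferentiableAt ℝ G' z) :
    pbC F (fun w ↦ G w + G' w) z = pbC F G z + pbC F G' z := by
  simp only [pbC, pdC, fderiv_fun_add hG hG', add_apply]
  ring

theorem pbC_sub_right (hG : DifferentiableAt ℝ G z) (hG' : DifferentiableAt ℝ G' z) :
    pbC F (fun w ↦ G w - G' w) z = pbC F G z - pbC F G' z := by
  simp only [pbC, pdC, fderiv_fun_sub hG hG', sub_apply]
  ring

theorem pbC_const_mul_right (c : ℂ) (hG : DifferentiableAt ℝ G z) :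
    pbC F (fun w ↦ c * G w) z = c * pbC F G z := by
  simp only [pbC, pdC, fderiv_const_mul hG, smul_apply, smul_eq_mul]
  ring

theorem pbC_sub_const_right (c : ℂ) : pbC F (fun w ↦ G w - c) z = pbC F G z := by
  simp only [pbC, pdC, fderiv_sub_const]

theorem pbC_mul_right (hG : DifferentiableAt ℝ G z) (hG' : DifferentiableAt ℝ G' z) :
    pbC F (fun w ↦ G w * G' w) z = G z * pbC F G' z + pbC F G z * G' z := by
  simp only [pbC, pdC, fderiv_fun_mul hG hG', add_apply, smul_apply, smul_eq_mul]
  ring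

theorem pbC_pow_right (n : ℕ) (hG : DifferentiableAt ℝ G z) :
    pbC F (fun w ↦ G w ^ n) z = n * G z ^ (n - 1) * pbC F G z := by
  simp only [pbC, pdC, fderiv_fun_pow n hG, smul_apply, smul_eq_mul, nsmul_eq_mul]
  ring

theorem pdC_ofReal {f' : (Fin 4 → ℝ) →L[ℝ] ℝ} (hf : HasFDerivAt f f' z) (i : Fin 4) :
    pdC i (f ·) z = f' (Pi.single i 1) := by
  have h : HasFDerivAt (fun w ↦ (f w : ℂ)) (ofRealCLM ∘L f') z :=
    ofRealCLM.hasFDerivAt.comp z hf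
  simp [pdC, h.fderiv]

theorem pbC_rpow_right (p : ℝ) (hf : DifferentiableAt ℝ f z) (hfz : f z ≠ 0) :
    pbC F (fun w ↦ ((f w ^ p : ℝ) : ℂ)) z = p * (f z ^ p / f z : ℝ) * pbC F (f ·) z := by
  have hfp := hf.hasFDerivAt.rpow_const (p := p) (.inl hfz)
  simp only [pbC, pdC_ofReal hfp, pdC_ofReal hf.hasFDerivAt, smul_apply, smul_eq_mul,
    Real.rpow_sub_one hfz]
  push_cast
  ring

end Bracket

/-- The constant covector `a₀ dφ + a₁ dθ + a₂ dp_φ + a₃ dp_θ`, in which the differentials of the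
phase space functions are expressed. -/
noncomputable def covector (a : Fin 4 → ℝ) : (Fin 4 → ℝ) →L[ℝ] ℝ :=
  ∑ i, a i • ContinuousLinearMap.proj i

theorem covector_single (a : Fin 4 → ℝ) (i : Fin 4) : covector a (Pi.single i 1) = a i := by
  simp [covector, Pi.single_apply]

theorem pbC_eq_of_hasFDerivAt_covector {f g : (Fin 4 → ℝ) → ℝ} {a c z : Fin 4 → ℝ}
    (hf : HasFDerivAt f (covector a) z) (hg : HasFDerivAt g (covector c) z) :
    pbC (f ·) (g ·) z = (a 0 * c 2 - a 2 * c 0 + a 1 * c 3 - a 3 * c 1 : ℝ) := by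
  simp only [pbC, pdC_ofReal hf, pdC_ofReal hg, covector_single]
  push_cast
  rfl

section Differentials

variable (z : Fin 4 → ℝ)

theorem hasFDerivAt_x1 :
    HasFDerivAt x1 (covector ![x2 z, Real.sin (z 0) * Real.cos (z 1), 0, 0]) z := by
  have h := (hasFDerivAt_apply (𝕜 := ℝ) 0 z).sin.fun_mul (hasFDerivAt_apply 1 z).sin
  refine h.congr_fderiv ?_
  simp only [covector, Fin.sum_univ_four, Matrix.cons_val, x2]
  module

theorem hasFDerivAt_x3 : HasFDerivAt x3 (covector ![0, -Real.sin (z 1), 0, 0]) z := by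
  refine (hasFDerivAt_apply (𝕜 := ℝ) 1 z).cos.congr_fderiv ?_
  simp only [covector, Fin.sum_univ_four, Matrix.cons_val]
  module

theorem hasFDerivAt_J3 : HasFDerivAt J3 (covector ![0, 0, -1, 0]) z := by
  refine (hasFDerivAt_apply (𝕜 := ℝ) 2 z).fun_neg.congr_fderiv ?_
  simp only [covector, Fin.sum_univ_four, Matrix.cons_val]
  module

variable {z}

theorem hasFDerivAt_cos_div_sin (hsin : Real.sin (z 1) ≠ 0) :
    HasFDerivAt (fun w : Fin 4 → ℝ ↦ Real.cos (w 1) / Real.sin (w 1))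
      (covector ![0, -1 / Real.sin (z 1) ^ 2, 0, 0]) z := by
  have hcot : HasDerivAt (fun t ↦ Real.cos t / Real.sin t) (-1 / Real.sin (z 1) ^ 2) (z 1) := by
    refine ((Real.hasDerivAt_cos _).fun_div (Real.hasDerivAt_sin _) hsin).congr_deriv ?_
    congr 1
    linear_combination -Real.sin_sq_add_cos_sq (z 1)
  refine (hcot.comp_hasFDerivAt z (hasFDerivAt_apply (𝕜 := ℝ) 1 z)).congr_fderiv ?_
  simp only [covector, Fin.sum_univ_four, Matrix.cons_val]
  module

theorem hasFDerivAt_J1 (hsin : Real.sin (z 1) ≠ 0) :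
    HasFDerivAt J1 (covector ![J2 z, -(Real.sin (z 0) * z 2 / Real.sin (z 1) ^ 2),
      Real.sin (z 0) * Real.cos (z 1) / Real.sin (z 1), -Real.cos (z 0)]) z := by
  have hφ := hasFDerivAt_apply (𝕜 := ℝ) 0 z
  have hcot := hasFDerivAt_cos_div_sin hsin
  have h := ((hφ.sin.fun_mul hcot).fun_mul (hasFDerivAt_apply 2 z)).fun_sub
    (hφ.cos.fun_mul (hasFDerivAt_apply 3 z))
  simp only [← mul_div_assoc] at h
  refine h.congr_fderiv ?_
  simp only [covector, Fin.sum_univ_four, Matrix.cons_val, J2]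
  module

theorem hasFDerivAt_J2 (hsin : Real.sin (z 1) ≠ 0) :
    HasFDerivAt J2 (covector ![-J1 z, -(Real.cos (z 0) * z 2 / Real.sin (z 1) ^ 2),
      Real.cos (z 0) * Real.cos (z 1) / Real.sin (z 1), Real.sin (z 0)]) z := by
  have hφ := hasFDerivAt_apply (𝕜 := ℝ) 0 z
  have hcot := hasFDerivAt_cos_div_sin hsin
  have h := ((hφ.cos.fun_mul hcot).fun_mul (hasFDerivAt_apply 2 z)).fun_add
    (hφ.sin.fun_mul (hasFDerivAt_apply 3 z))
  simp only [← mul_div_assoc] at h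
  refine h.congr_fderiv ?_
  simp only [covector, Fin.sum_univ_four, Matrix.cons_val, J1]
  module

end Differentials

section Relations

variable (z : Fin 4 → ℝ)

theorem pbC_x1_x3 : pbC (x1 ·) (x3 ·) z = 0 := by
  simp [pbC_eq_of_hasFDerivAt_covector (hasFDerivAt_x1 z) (hasFDerivAt_x3 z)]

theorem pbC_J3_x1 : pbC (J3 ·) (x1 ·) z = x2 z := by
  simp [pbC_eq_of_hasFDerivAt_covector (hasFDerivAt_J3 z) (hasFDerivAt_x1 z)]

theorem pbC_J3_x3 : pbC (J3 ·) (x3 ·) z = 0 := by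
  simp [pbC_eq_of_hasFDerivAt_covector (hasFDerivAt_J3 z) (hasFDerivAt_x3 z)]

variable {z}

theorem pbC_J1_x1 (hsin : Real.sin (z 1) ≠ 0) : pbC (J1 ·) (x1 ·) z = 0 := by
  rw [pbC_eq_of_hasFDerivAt_covector (hasFDerivAt_J1 hsin) (hasFDerivAt_x1 z), ofReal_eq_zero]
  simp only [Matrix.cons_val, x2]
  field_simp
  ring

theorem pbC_J1_x3 (hsin : Real.sin (z 1) ≠ 0) : pbC (J1 ·) (x3 ·) z = -x2 z := by
  simp [pbC_eq_of_hasFDerivAt_covector (hasFDerivAt_J1 hsin) (hasFDerivAt_x3 z), x2]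

theorem pbC_J2_x3 (hsin : Real.sin (z 1) ≠ 0) : pbC (J2 ·) (x3 ·) z = x1 z := by
  simp [pbC_eq_of_hasFDerivAt_covector (hasFDerivAt_J2 hsin) (hasFDerivAt_x3 z), x1]

theorem pbC_J3_J1 (hsin : Real.sin (z 1) ≠ 0) : pbC (J3 ·) (J1 ·) z = J2 z := by
  simp [pbC_eq_of_hasFDerivAt_covector (hasFDerivAt_J3 z) (hasFDerivAt_J1 hsin)]

theorem pbC_J2_J3 (hsin : Real.sin (z 1) ≠ 0) : pbC (J2 ·) (J3 ·) z = J1 z := by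
  simp [pbC_eq_of_hasFDerivAt_covector (hasFDerivAt_J2 hsin) (hasFDerivAt_J3 z)]

theorem pbC_J1_J2 (hsin : Real.sin (z 1) ≠ 0) : pbC (J1 ·) (J2 ·) z = J3 z := by
  rw [pbC_eq_of_hasFDerivAt_covector (hasFDerivAt_J1 hsin) (hasFDerivAt_J2 hsin), ofReal_inj]
  simp only [Matrix.cons_val, J1, J2, J3]
  field_simp
  linear_combination (Real.cos (z 1) ^ 2 - 1) * z 2 * Real.sin_sq_add_cos_sq (z 0)
    + z 2 * Real.sin_sq_add_cos_sq (z 1)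

theorem x_dot_J_eq_zero (hsin : Real.sin (z 1) ≠ 0) :
    x1 z * J1 z + x2 z * J2 z + x3 z * J3 z = 0 := by
  simp only [x1, x2, x3, J1, J2, J3]
  field_simp
  linear_combination (Real.cos (z 1) * z 2) * Real.sin_sq_add_cos_sq (z 0)

end Relations

section Goryachev

variable {F : (Fin 4 → ℝ) → ℂ} {z : Fin 4 → ℝ} (α : ℂ) (b : ℝ)

theorem H1gor_eq : H1gor α b = fun w ↦ (J1 w : ℂ) ^ 2 + (J2 w : ℂ) ^ 2 + 4 / 3 * (J3 w : ℂ) ^ 2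
    + (2 * I * α * x1 w - b) * (x3 w ^ (-(2 : ℝ) / 3) : ℝ) := by
  funext w
  simp only [H1gor]
  push_cast
  ring

theorem H2gor_eq : H2gor α b = fun w ↦ 2 / 3 * (J3 w * H1gor α b w) - 8 / 27 * (J3 w : ℂ) ^ 3
    - 2 * I * α * ((x3 w ^ ((1 : ℝ) / 3) : ℝ) * J1 w) := by
  funext w
  simp only [H1gor, H2gor]
  push_cast
  ring

theorem pbC_H1gor_right (hsin : Real.sin (z 1) ≠ 0) (hx3 : x3 z ≠ 0) :
    pbC F (H1gor α b) z = 2 * J1 z * pbC F (J1 ·) z + 2 * J2 z * pbC F (J2 ·) z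
      + 8 / 3 * J3 z * pbC F (J3 ·) z
      + 2 * I * α * (x3 z ^ (-(2 : ℝ) / 3) : ℝ) * pbC F (x1 ·) z
      - 2 / 3 * (2 * I * α * x1 z - b) * (x3 z ^ (-(2 : ℝ) / 3) / x3 z : ℝ)
        * pbC F (x3 ·) z := by
  have hJ1 := (hasFDerivAt_J1 hsin).differentiableAt
  have hJ2 := (hasFDerivAt_J2 hsin).differentiableAt
  have hJ3 := (hasFDerivAt_J3 z).differentiableAt
  have hx1 := (hasFDerivAt_x1 z).differentiableAt
  have hx3' := (hasFDerivAt_x3 z).differentiableAt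
  simp (disch := fun_prop) only [H1gor_eq, pbC_add_right, pbC_sub_const_right, pbC_const_mul_right,
    pbC_mul_right, pbC_pow_right, pbC_rpow_right _ hx3' hx3]
  push_cast
  ring

theorem pbC_J3_H1gor (hsin : Real.sin (z 1) ≠ 0) (hx3 : x3 z ≠ 0) :
    pbC (J3 ·) (H1gor α b) z = 2 * I * α * (x3 z ^ (-(2 : ℝ) / 3) : ℝ) * x2 z := by
  rw [pbC_H1gor_right α b hsin hx3, pbC_J3_J1 hsin, pbC_swap (J3 ·) (J2 ·), pbC_J2_J3 hsin,
    pbC_self, pbC_J3_x1, pbC_J3_x3]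
  ring

theorem pbC_J1_H1gor (hsin : Real.sin (z 1) ≠ 0) (hx3 : x3 z ≠ 0) :
    pbC (J1 ·) (H1gor α b) z = 2 / 3 * ((2 * I * α * x1 z - b)
      * (x3 z ^ (-(2 : ℝ) / 3) / x3 z : ℝ) * x2 z - J2 z * J3 z) := by
  rw [pbC_H1gor_right α b hsin hx3, pbC_self, pbC_J1_J2 hsin, pbC_swap (J1 ·) (J3 ·),
    pbC_J3_J1 hsin, pbC_J1_x1 hsin, pbC_J1_x3 hsin]
  ring

theorem pbC_x3_H1gor (hsin : Real.sin (z 1) ≠ 0) (hx3 : x3 z ≠ 0) :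
    pbC (x3 ·) (H1gor α b) z = 2 * (x2 z * J1 z - x1 z * J2 z) := by
  rw [pbC_H1gor_right α b hsin hx3, pbC_swap (x3 ·) (J1 ·), pbC_J1_x3 hsin,
    pbC_swap (x3 ·) (J2 ·), pbC_J2_x3 hsin, pbC_swap (x3 ·) (J3 ·), pbC_J3_x3,
    pbC_swap (x3 ·) (x1 ·), pbC_x1_x3, pbC_self]
  ring

theorem differentiableAt_H1gor (hsin : Real.sin (z 1) ≠ 0) (hx3 : x3 z ≠ 0) :
    DifferentiableAt ℝ (H1gor α b) z := by
  have hJ1 := (hasFDerivAt_J1 hsin).differentiableAt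
  have hJ2 := (hasFDerivAt_J2 hsin).differentiableAt
  have hJ3 := (hasFDerivAt_J3 z).differentiableAt
  have hx1 := (hasFDerivAt_x1 z).differentiableAt
  have hx3' := (hasFDerivAt_x3 z).differentiableAt
  rw [H1gor_eq]
  fun_prop

theorem pbC_H1gor_rpow_mul_J1 (hsin : Real.sin (z 1) ≠ 0) (hx3 : x3 z ≠ 0) :
    pbC (H1gor α b) (fun w ↦ (x3 w ^ ((1 : ℝ) / 3) : ℝ) * (J1 w : ℂ)) z =
      -(2 / 3) * (x3 z ^ (-(2 : ℝ) / 3) : ℝ) * x2 z * (H1gor α b z - 4 / 3 * (J3 z : ℂ) ^ 2) := by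
  have hJ1 := (hasFDerivAt_J1 hsin).differentiableAt
  have hx3' := (hasFDerivAt_x3 z).differentiableAt
  have hqr : x3 z ^ ((1 : ℝ) / 3) = x3 z ^ (-(2 : ℝ) / 3) * x3 z := by
    rw [← Real.rpow_add_one hx3]
    norm_num
  have hxJ : (x1 z * J1 z + x2 z * J2 z + x3 z * J3 z : ℂ) = 0 := mod_cast x_dot_J_eq_zero hsin
  have hx3C : (x3 z : ℂ) ≠ 0 := mod_cast hx3
  rw [pbC_mul_right (by fun_prop) (by fun_prop), pbC_rpow_right _ hx3' hx3,
    pbC_swap _ (J1 ·), pbC_swap _ (x3 ·), pbC_J1_H1gor α b hsin hx3, pbC_x3_H1gor α b hsin hx3,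
    H1gor_eq, hqr]
  beta_reduce
  generalize x3 z ^ (-(2 : ℝ) / 3) = r
  push_cast
  field_simp
  linear_combination 3 * r * J2 z * hxJ

/-- For `x₃ < 0`, `Real.rpow` makes both powers of `x₃` equal to `-1/2` times those formed with the
real cube root, so there `α` and `b` are rescaled by `-1/2`. -/
theorem statement9_general (hsin : Real.sin (z 1) ≠ 0) (hx3 : x3 z ≠ 0) :
    pbC (H1gor α b) (H2gor α b) z = 0 := by
  have hJ1 := (hasFDerivAt_J1 hsin).differentiableAt
  have hJ3 := (hasFDerivAt_J3 z).differentiableAt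
  have hx3' := (hasFDerivAt_x3 z).differentiableAt
  have hH1 := differentiableAt_H1gor α b hsin hx3
  rw [H2gor_eq]
  simp (disch := fun_prop) only [pbC_sub_right, pbC_const_mul_right]
  rw [pbC_H1gor_rpow_mul_J1 α b hsin hx3]
  simp (disch := fun_prop) only [pbC_mul_right, pbC_pow_right, pbC_self]
  rw [pbC_swap _ (J3 ·), pbC_J3_H1gor α b hsin hx3]
  push_cast
  ring

end Goryachev

theorem statement9 (α : ℂ) (b : ℝ) (z : Fin 4 → ℝ)
    (hz : 0 < z 1) (hz' : z 1 < π / 2) :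
    pbC (H1gor α b) (H2gor α b) z = 0 :=
  statement9_general α b (Real.sin_pos_of_pos_of_lt_pi hz (by linarith [Real.pi_pos])).ne'
    (Real.cos_pos_of_mem_Ioo ⟨by linarith, hz'⟩).ne'
end

section
/- Let a, b, c, d be real parameters, let x₂₂ be an arbitrary smooth real function of θ, and work on a domain where sin φ cos φ sin θ cos θ ≠ 0. Define Π₁₁ = p_φ², Π₁₂ = (1 + tan²θ) p_φ p_θ, Π₂₁ = 0, Π₂₂ = (1 + tan²θ) p_φ² + p_θ², y₁₂ = 2 x₂₂(θ) − cos θ sin θ; set f(φ) = a cot²φ + b/sin²φ + c/(sin²φ cos²φ) + 2d cos²φ (2cos²φ − 3)/sin²φ and g(φ,θ) = 2d sin³θ sin 2φ/cos θ, and let Λ₁₁ = f(φ), Λ₁₂ = g(φ,θ), Λ₂₁ = f′(φ) sin θ/(2 cos θ) − g(φ,θ), Λ₂₂ = 2 cos 2φ (2cos²θ + 1) g(φ,θ)/(sin 2φ sin 2θ) + f(φ)/cos²θ + a tan²θ. Define the bivector π′ by {φ,θ}_{π′} = x₂₂ ∂Π₂₂/∂p_φ − y₁₂ ∂Π₁₂/∂p_θ,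 {q_i,p_j}_{π′} = Π_{ij} + Λ_{ij} (where (q₁,q₂,p₁,p₂) = (φ,θ,p_φ,p_θ)), and {p_φ,p_θ}_{π′} = (∂Λ₁₁/∂θ − ∂Λ₁₂/∂φ) p_φ + (∂Λ₂₁/∂θ − ∂Λ₂₂/∂φ) p_θ. Then: (i) π′ is a Poisson bivector compatible with the canonical bivector P; (ii) with N = π′ P^{−1} (a matrix product of the 4×4 matrices of π′ and the inverse of the matrix of P), the functions ℋ₁ = (1/2) tr N and ℋ₂ = (1/4) tr N² satisfy {ℋ₁, ℋ₂}_P = 0 and {ℋ₁, ℋ₂}_{π′} = 0. -/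
open Real

/-- Partial derivative in the `i`-th coordinate direction on `ℝ⁴`
(coordinates `z 0 = φ`, `z 1 = θ`, `z 2 = p_φ`, `z 3 = p_θ`). -/
noncomputable def pd (i : Fin 4) (F : (Fin 4 → ℝ) → ℝ) (z : Fin 4 → ℝ) : ℝ :=
  fderiv ℝ F z (Pi.single i 1)

/-- The Poisson bracket of `F` and `G` defined by a bivector `π`. -/
noncomputable def pbiv (Pv : (Fin 4 → ℝ) → Matrix (Fin 4) (Fin 4) ℝ)
    (F G : (Fin 4 → ℝ) → ℝ) (z : Fin 4 → ℝ) : ℝ :=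
  ∑ i : Fin 4, ∑ j : Fin 4, Pv z i j * pd i F z * pd j G z

/-- A bivector `π` satisfies the Jacobi identity (is a Poisson bivector) on `U`. -/
def IsPoissonOn (Pv : (Fin 4 → ℝ) → Matrix (Fin 4) (Fin 4) ℝ)
    (U : Set (Fin 4 → ℝ)) : Prop :=
  ∀ z ∈ U, ∀ i j k : Fin 4,
    (∑ l : Fin 4, (Pv z l i * pd l (fun w => Pv w j k) z
      + Pv z l j * pd l (fun w => Pv w k i) z
      + Pv z l k * pd l (fun w => Pv w i j) z)) = 0

/-- The antisymmetric matrix with the given upper-triangular entries: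
`a = {φ,θ}`, `b = {φ,p_φ}`, `c = {φ,p_θ}`, `d = {θ,p_φ}`, `e = {θ,p_θ}`, `f = {p_φ,p_θ}`. -/
noncomputable def skew (a b c d e f : ℝ) : Matrix (Fin 4) (Fin 4) ℝ :=
  !![0, a, b, c; -a, 0, d, e; -b, -d, 0, f; -c, -e, -f, 0]

/-- The canonical Poisson bivector: `{φ,p_φ} = {θ,p_θ} = 1`, all other brackets zero. -/
noncomputable def Pcan : Matrix (Fin 4) (Fin 4) ℝ :=
  !![0, 0, 1, 0; 0, 0, 0, 1; -1, 0, 0, 0; 0, -1, 0, 0]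

/-- `f(φ) = a cot²φ + b/sin²φ + c/(sin²φ cos²φ) + 2d cos²φ (2cos²φ − 3)/sin²φ`. -/
noncomputable def fpot (a b c d : ℝ) (φ : ℝ) : ℝ :=
  a * (cos φ / sin φ) ^ 2 + b / sin φ ^ 2 + c / (sin φ ^ 2 * cos φ ^ 2)
    + 2 * d * cos φ ^ 2 * (2 * cos φ ^ 2 - 3) / sin φ ^ 2

/-- `g(φ,θ) = 2d sin³θ sin 2φ/cos θ`. -/
noncomputable def gpot (d : ℝ) (φ θ : ℝ) : ℝ :=
  2 * d * sin θ ^ 3 * sin (2 * φ) / cos θ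

noncomputable def Pi11 (z : Fin 4 → ℝ) : ℝ := z 2 ^ 2

noncomputable def Pi12 (z : Fin 4 → ℝ) : ℝ := (1 + tan (z 1) ^ 2) * z 2 * z 3

noncomputable def Pi21 (z : Fin 4 → ℝ) : ℝ := 0

noncomputable def Pi22 (z : Fin 4 → ℝ) : ℝ := (1 + tan (z 1) ^ 2) * z 2 ^ 2 + z 3 ^ 2

noncomputable def La11 (a b c d : ℝ) (z : Fin 4 → ℝ) : ℝ := fpot a b c d (z 0)

noncomputable def La12 (d : ℝ) (z : Fin 4 → ℝ) : ℝ := gpot d (z 0) (z 1)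

noncomputable def La21 (a b c d : ℝ) (z : Fin 4 → ℝ) : ℝ :=
  deriv (fpot a b c d) (z 0) * sin (z 1) / (2 * cos (z 1)) - gpot d (z 0) (z 1)

noncomputable def La22 (a b c d : ℝ) (z : Fin 4 → ℝ) : ℝ :=
  2 * cos (2 * z 0) * (2 * cos (z 1) ^ 2 + 1) * gpot d (z 0) (z 1)
      / (sin (2 * z 0) * sin (2 * z 1))
    + fpot a b c d (z 0) / cos (z 1) ^ 2 + a * tan (z 1) ^ 2

/-- `y₁₂ = 2 x₂₂(θ) − cos θ sin θ`. -/
noncomputable def y12 (x22 : ℝ → ℝ) (z : Fin 4 → ℝ) : ℝ :=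
  2 * x22 (z 1) - cos (z 1) * sin (z 1)

/-- The natural Poisson bivector `π′`:
`{φ,θ} = x₂₂ ∂Π₂₂/∂p_φ − y₁₂ ∂Π₁₂/∂p_θ`, `{q_i,p_j} = Π_{ij} + Λ_{ij}`,
`{p_φ,p_θ} = (∂Λ₁₁/∂θ − ∂Λ₁₂/∂φ) p_φ + (∂Λ₂₁/∂θ − ∂Λ₂₂/∂φ) p_θ`. -/
noncomputable def piNew (a b c d : ℝ) (x22 : ℝ → ℝ) (z : Fin 4 → ℝ) :
    Matrix (Fin 4) (Fin 4) ℝ :=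
  skew
    (x22 (z 1) * pd 2 Pi22 z - y12 x22 z * pd 3 Pi12 z)
    (Pi11 z + La11 a b c d z)
    (Pi12 z + La12 d z)
    (Pi21 z + La21 a b c d z)
    (Pi22 z + La22 a b c d z)
    ((pd 1 (La11 a b c d) z - pd 0 (La12 d) z) * z 2
      + (pd 1 (La21 a b c d) z - pd 0 (La22 a b c d) z) * z 3)

/-- The recursion operator `N = π′ P⁻¹`. -/
noncomputable def Nrec (a b c d : ℝ) (x22 : ℝ → ℝ) (z : Fin 4 → ℝ) :
    Matrix (Fin 4) (Fin 4) ℝ :=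
  piNew a b c d x22 z * Pcan⁻¹

/-- `ℋ₁ = (1/2) tr N`. -/
noncomputable def Hcal1 (a b c d : ℝ) (x22 : ℝ → ℝ) (z : Fin 4 → ℝ) : ℝ :=
  (1 / 2) * Matrix.trace (Nrec a b c d x22 z)

/-- `ℋ₂ = (1/4) tr N²`. -/
noncomputable def Hcal2 (a b c d : ℝ) (x22 : ℝ → ℝ) (z : Fin 4 → ℝ) : ℝ :=
  (1 / 4) * Matrix.trace (Nrec a b c d x22 z * Nrec a b c d x22 z)

/-- The canonical Poisson bracket on functions of `(φ, θ, p_φ, p_θ)`. -/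
noncomputable def pb (F G : (Fin 4 → ℝ) → ℝ) (z : Fin 4 → ℝ) : ℝ :=
  pd 0 F z * pd 2 G z - pd 2 F z * pd 0 G z + pd 1 F z * pd 3 G z - pd 3 F z * pd 1 G z

/-!
The coefficient `y₁₂` is chosen so that `x₂₂` cancels in `{φ,θ}`, leaving `tan θ · p_φ`. The
potentials `Λᵢⱼ` keep their shape for arbitrary functions `f`, `g` of `φ` with `g″ = -4 g`, and
then `π′` is compatible with `P`, while its Jacobi identity reduces to the single equation
`g (12 g′ - f″ + 8 (f + a)) = 3 f′ g′`, which the given `f` and `g` satisfy. Contracting the Jacobi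
identity with `P⁻¹` and the compatibility condition with `P⁻¹ π′ P⁻¹` gives the Lenard relation
`π′ dℋ₁ = P dℋ₂`, and then both brackets of `ℋ₁` and `ℋ₂` vanish by antisymmetry.
-/

section CyclicSum

open Matrix

variable {ι R : Type*} [Fintype ι] [CommRing R]

/-- The cyclic sum `∑ₗ Qₗᵢ (Dₗ)ⱼₖ + (cyclic permutations of i, j, k)`. When `Dₗ` is the `l`-th
partial derivative of a bivector `π` at a point, the choice `Q = π` gives the left-hand side of the
Jacobi identity for `π`, and a constant `Q` gives (up to normalization) the Schouten bracket of `Q`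
and `π`. -/
def cyclicSum (Q : Matrix ι ι R) (D : ι → Matrix ι ι R) (i j k : ι) : R :=
  ∑ l, (Q l i * D l j k + Q l j * D l k i + Q l k * D l i j)

theorem cyclicSum_add_left (P Q : Matrix ι ι R) (D : ι → Matrix ι ι R) (i j k : ι) :
    cyclicSum (P + Q) D i j k = cyclicSum P D i j k + cyclicSum Q D i j k := by
  simp only [cyclicSum, Matrix.add_apply, ← Finset.sum_add_distrib]
  exact Finset.sum_congr rfl fun l _ => by ring

theorem cyclicSum_rotate (Q : Matrix ι ι R) (D : ι → Matrix ι ι R) (i j k : ι) :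
    cyclicSum Q D i j k = cyclicSum Q D j k i :=
  Finset.sum_congr rfl fun l _ => by ring

theorem cyclicSum_swap (Q : Matrix ι ι R) {D : ι → Matrix ι ι R} (hD : ∀ l, (D l)ᵀ = -D l)
    (i j k : ι) : cyclicSum Q D i j k = -cyclicSum Q D j i k := by
  have hD' (l p q : ι) : D l p q = -D l q p := congrFun₂ (hD l) q p
  rw [cyclicSum, cyclicSum, ← Finset.sum_neg_distrib]
  refine Finset.sum_congr rfl fun l _ => ?_
  rw [hD' l j k, hD' l k i, hD' l i j]
  ring

theorem eq_zero_of_rotate_of_swap {ι A : Type*} [LinearOrder ι] [AddGroup A] [IsAddTorsionFree A]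
    {T : ι → ι → ι → A} (rotate : ∀ i j k, T i j k = T j k i) (swap : ∀ i j k, T i j k = -T j i k)
    (sorted : ∀ i j k, i < j → j < k → T i j k = 0) (i j k : ι) : T i j k = 0 := by
  have diag (i k : ι) : T i i k = 0 := self_eq_neg.mp (swap i i k)
  have of_lt {i j : ι} (hij : i < j) (k : ι) : T i j k = 0 := by
    rcases lt_trichotomy j k with hjk | rfl | hkj
    · exact sorted i j k hij hjk
    · rw [rotate, diag]
    rcases lt_trichotomy i k with hik | rfl | hki
    · rw [swap, rotate, sorted i k j hik hkj, neg_zero]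
    · rw [rotate, rotate, diag]
    · rw [← rotate, sorted k i j hki hij]
  rcases lt_trichotomy i j with hij | rfl | hji
  · exact of_lt hij k
  · exact diag i k
  · rw [swap, of_lt hji, neg_zero]

theorem sum_mul_cyclicSum (Q : Matrix ι ι R) {D : ι → Matrix ι ι R} (hD : ∀ l, (D l)ᵀ = -D l)
    {K : Matrix ι ι R} (hK : Kᵀ = -K) (i : ι) :
    ∑ j, ∑ k, K k j * cyclicSum Q D i j k =
      ∑ l, Q l i * trace (D l * K) - 2 * ∑ l, (Q * K * D l) l i := by
  have hD' (l p q : ι) : D l p q = -D l q p := congrFun₂ (hD l) q p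
  have hK' (p q : ι) : K p q = -K q p := congrFun₂ hK q p
  have trace_term : ∑ l, Q l i * trace (D l * K) = ∑ l, ∑ j, ∑ k, K k j * (Q l i * D l j k) := by
    simp only [trace, diag_apply, mul_apply, Finset.mul_sum]
    exact Finset.sum_congr rfl fun l _ => Finset.sum_congr rfl fun j _ =>
      Finset.sum_congr rfl fun k _ => by ring
  have second_term : -∑ l, (Q * K * D l) l i = ∑ l, ∑ j, ∑ k, K k j * (Q l j * D l k i) := by
    simp only [mul_apply, Finset.sum_mul, ← Finset.sum_neg_distrib]
    refine Finset.sum_congr rfl fun l _ => Finset.sum_comm.trans ?_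
    exact Finset.sum_congr rfl fun j _ => Finset.sum_congr rfl fun k _ => by rw [hK' j k]; ring
  have third_term : -∑ l, (Q * K * D l) l i = ∑ l, ∑ j, ∑ k, K k j * (Q l k * D l i j) := by
    simp only [mul_apply, Finset.sum_mul, ← Finset.sum_neg_distrib]
    exact Finset.sum_congr rfl fun l _ => Finset.sum_congr rfl fun j _ =>
      Finset.sum_congr rfl fun k _ => by rw [hD' l j i]; ring
  calc ∑ j, ∑ k, K k j * cyclicSum Q D i j k
      = ∑ l, ∑ j, ∑ k,
          K k j * (Q l i * D l j k + Q l j * D l k i + Q l k * D l i j) := by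
        simp only [cyclicSum, Finset.mul_sum]
        exact (Finset.sum_congr rfl fun j _ => Finset.sum_comm).trans Finset.sum_comm
    _ = ∑ l, Q l i * trace (D l * K) + -∑ l, (Q * K * D l) l i + -∑ l, (Q * K * D l) l i := by
        rw [trace_term]
        nth_rw 1 [second_term]
        rw [third_term]
        simp only [mul_add, Finset.sum_add_distrib]
    _ = ∑ l, Q l i * trace (D l * K) - 2 * ∑ l, (Q * K * D l) l i := by ring

-- Contracting the Jacobi identity with `ω` and the compatibility condition with `ω Q ω` leaves the
-- same remainder, because `P (ω Q ω) = Q ω`.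
theorem lenard_of_cyclicSum_eq_zero [DecidableEq ι] {P Q ω : Matrix ι ι R}
    {D : ι → Matrix ι ι R} (hD : ∀ l, (D l)ᵀ = -D l) (hP : Pᵀ = -P) (hQ : Qᵀ = -Q)
    (hPω : P * ω = 1) (jacobi : ∀ i j k, cyclicSum Q D i j k = 0)
    (compatible : ∀ i j k, cyclicSum P D i j k = 0) :
    (fun l => trace (D l * ω)) ᵥ* Q = (fun l => trace (D l * (ω * Q * ω))) ᵥ* P := by
  have hω : ωᵀ = -ω := by
    have hPωT : P * -ωᵀ = 1 := by
      rw [mul_neg, ← neg_mul, ← hP, ← transpose_mul, mul_eq_one_comm.mp hPω, transpose_one]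
    rw [← neg_neg ωᵀ, right_inv_eq_right_inv hPωT hPω]
  have hωQω : (ω * Q * ω)ᵀ = -(ω * Q * ω) := by
    simp only [transpose_mul, hω, hQ, neg_mul, mul_neg, neg_neg, Matrix.mul_assoc]
  have same_remainder : P * (ω * Q * ω) = Q * ω := by
    rw [Matrix.mul_assoc ω, ← Matrix.mul_assoc, hPω, Matrix.one_mul]
  ext i
  have contract_jacobi := sum_mul_cyclicSum Q hD hω i
  have contract_compatible := sum_mul_cyclicSum P hD hωQω i
  simp only [jacobi, compatible, mul_zero, Finset.sum_const_zero, same_remainder]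
    at contract_jacobi contract_compatible
  simp only [vecMul, dotProduct]
  calc ∑ l, trace (D l * ω) * Q l i = ∑ l, Q l i * trace (D l * ω) := by simp only [mul_comm]
    _ = ∑ l, P l i * trace (D l * (ω * Q * ω)) := by
      linear_combination contract_compatible - contract_jacobi
    _ = ∑ l, trace (D l * (ω * Q * ω)) * P l i := by simp only [mul_comm]

end CyclicSum

section Gradient

variable {F G : (Fin 4 → ℝ) → ℝ} {z D E : Fin 4 → ℝ}

/-- The vector of partial derivatives of a function on `ℝ⁴`. -/
noncomputable def grad (F : (Fin 4 → ℝ) → ℝ) (z : Fin 4 → ℝ) : Fin 4 → ℝ :=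
  fun i => pd i F z

/-- `F` is differentiable at `z` with partial derivatives `D 0, …, D 3`; the companion of
`HasDerivAt` for functions on `ℝ⁴`. -/
def HasGradAt (F : (Fin 4 → ℝ) → ℝ) (D z : Fin 4 → ℝ) : Prop :=
  DifferentiableAt ℝ F z ∧ grad F z = D

namespace HasGradAt

theorem pd_eq (hF : HasGradAt F D z) (i : Fin 4) : pd i F z = D i :=
  congrFun hF.2 i

theorem of_hasFDerivAt {F' : (Fin 4 → ℝ) →L[ℝ] ℝ} (hF : HasFDerivAt F F' z)
    (hD : ∀ i, F' (Pi.single i 1) = D i) : HasGradAt F D z :=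
  ⟨hF.differentiableAt, funext fun i => by rw [grad, pd, hF.fderiv, hD]⟩

theorem congr_grad (hF : HasGradAt F D z) (h : D = E) : HasGradAt F E z :=
  h ▸ hF

theorem congr_of_eventuallyEq (hG : HasGradAt G D z) (h : F =ᶠ[nhds z] G) : HasGradAt F D z :=
  ⟨hG.1.congr_of_eventuallyEq h, by rw [← hG.2]; funext i; rw [grad, grad, pd, pd, h.fderiv_eq]⟩

theorem const (c : ℝ) (z : Fin 4 → ℝ) : HasGradAt (fun _ => c) 0 z :=
  of_hasFDerivAt (hasFDerivAt_const c z) fun _ => rfl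

theorem comp_coord (i : Fin 4) {f : ℝ → ℝ} {f' : ℝ} (hf : HasDerivAt f f' (z i)) :
    HasGradAt (fun w => f (w i)) (Pi.single i f') z := by
  refine of_hasFDerivAt (hf.comp_hasFDerivAt z (hasFDerivAt_apply i z)) fun j => ?_
  simp [Pi.single_apply, eq_comm]

theorem coord (i : Fin 4) (z : Fin 4 → ℝ) : HasGradAt (fun w => w i) (Pi.single i 1) z :=
  comp_coord i (hasDerivAt_id (z i))

theorem add (hF : HasGradAt F D z) (hG : HasGradAt G E z) :
    HasGradAt (fun w => F w + G w) (D + E) z :=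
  of_hasFDerivAt (hF.1.hasFDerivAt.add hG.1.hasFDerivAt) fun i =>
    congrArg₂ (· + ·) (hF.pd_eq i) (hG.pd_eq i)

theorem neg (hF : HasGradAt F D z) : HasGradAt (fun w => -F w) (-D) z :=
  of_hasFDerivAt hF.1.hasFDerivAt.neg fun i => congrArg Neg.neg (hF.pd_eq i)

theorem sub (hF : HasGradAt F D z) (hG : HasGradAt G E z) :
    HasGradAt (fun w => F w - G w) (D - E) z :=
  of_hasFDerivAt (hF.1.hasFDerivAt.sub hG.1.hasFDerivAt) fun i =>
    congrArg₂ (· - ·) (hF.pd_eq i) (hG.pd_eq i)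

theorem mul (hF : HasGradAt F D z) (hG : HasGradAt G E z) :
    HasGradAt (fun w => F w * G w) (F z • E + G z • D) z :=
  of_hasFDerivAt (hF.1.hasFDerivAt.mul hG.1.hasFDerivAt) fun i => by
    rw [← hF.2, ← hG.2]; rfl

theorem sum {ι : Type*} (s : Finset ι) {F : ι → (Fin 4 → ℝ) → ℝ} {D : ι → Fin 4 → ℝ}
    (hF : ∀ k ∈ s, HasGradAt (F k) (D k) z) :
    HasGradAt (fun w => ∑ k ∈ s, F k w) (∑ k ∈ s, D k) z :=
  of_hasFDerivAt (HasFDerivAt.fun_sum fun k hk => (hF k hk).1.hasFDerivAt) fun i => by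
    rw [sum_apply, Finset.sum_apply]
    exact Finset.sum_congr rfl fun k hk => (hF k hk).pd_eq i

end HasGradAt

end Gradient

section Bivector

open Matrix

variable {Q M N : (Fin 4 → ℝ) → Matrix (Fin 4) (Fin 4) ℝ} {P ω : Matrix (Fin 4) (Fin 4) ℝ}
  {D E : Fin 4 → Matrix (Fin 4) (Fin 4) ℝ} {U : Set (Fin 4 → ℝ)} {z : Fin 4 → ℝ}
  {F G : (Fin 4 → ℝ) → ℝ}

/-- The entries of the matrix-valued function `M` are differentiable at `z`, and the matrix of
their `l`-th partial derivatives is `D l`. -/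
def HasPartialsAt (M : (Fin 4 → ℝ) → Matrix (Fin 4) (Fin 4) ℝ)
    (D : Fin 4 → Matrix (Fin 4) (Fin 4) ℝ) (z : Fin 4 → ℝ) : Prop :=
  ∀ i j, HasGradAt (fun w => M w i j) (fun l => D l i j) z

namespace HasPartialsAt

theorem congr_of_eventuallyEq (hN : HasPartialsAt N D z) (h : M =ᶠ[nhds z] N) :
    HasPartialsAt M D z := fun i j =>
  (hN i j).congr_of_eventuallyEq (h.fun_comp (· i j))

theorem const (P : Matrix (Fin 4) (Fin 4) ℝ) (z : Fin 4 → ℝ) :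
    HasPartialsAt (fun _ => P) 0 z := fun i j =>
  HasGradAt.const (P i j) z

theorem add (hM : HasPartialsAt M D z) (hN : HasPartialsAt N E z) :
    HasPartialsAt (fun w => M w + N w) (D + E) z := fun i j =>
  (hM i j).add (hN i j)

theorem mul (hM : HasPartialsAt M D z) (hN : HasPartialsAt N E z) :
    HasPartialsAt (fun w => M w * N w) (fun l => D l * N z + M z * E l) z := fun i j => by
  have h := HasGradAt.sum Finset.univ fun k _ => (hM i k).mul (hN k j)
  refine ⟨h.1, h.2.trans (funext fun l => ?_)⟩
  simp only [Finset.sum_apply, Pi.add_apply, Pi.smul_apply, smul_eq_mul, Matrix.add_apply,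
    mul_apply, ← Finset.sum_add_distrib]
  exact Finset.sum_congr rfl fun k _ => by ring

theorem trace (hM : HasPartialsAt M D z) :
    HasGradAt (fun w => Matrix.trace (M w)) (fun l => Matrix.trace (D l)) z := by
  have h := HasGradAt.sum Finset.univ fun k _ => hM k k
  exact ⟨h.1, h.2.trans (funext fun l => Finset.sum_apply l _ _)⟩

end HasPartialsAt

theorem isPoissonOn_iff {D : (Fin 4 → ℝ) → Fin 4 → Matrix (Fin 4) (Fin 4) ℝ}
    (hQ : ∀ z ∈ U, HasPartialsAt Q (D z) z) :
    IsPoissonOn Q U ↔ ∀ z ∈ U, ∀ i j k, cyclicSum (Q z) (D z) i j k = 0 := by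
  refine forall₂_congr fun z hz => forall₃_congr fun i j k => ?_
  simp only [(hQ z hz _ _).pd_eq, cyclicSum]

theorem lenard_relation (hPω : P * ω = 1) (hP : Pᵀ = -P) (hQ : (Q z)ᵀ = -Q z)
    (hQD : HasPartialsAt Q D z) (hD : ∀ l, (D l)ᵀ = -D l)
    (jacobi : ∀ i j k, cyclicSum (Q z) D i j k = 0)
    (compatible : ∀ i j k, cyclicSum P D i j k = 0) :
    grad (fun w => 1 / 2 * trace (Q w * ω)) z ᵥ* Q z =
      grad (fun w => 1 / 4 * trace (Q w * ω * (Q w * ω))) z ᵥ* P := by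
  have partials_N : HasPartialsAt (fun w => Q w * ω) (fun l => D l * ω) z := by
    simpa only [Pi.zero_apply, mul_zero, add_zero] using hQD.mul (.const ω z)
  have grad_H₁ : grad (fun w => 1 / 2 * trace (Q w * ω)) z =
      (1 / 2 : ℝ) • fun l => trace (D l * ω) := by
    simpa only [smul_zero, add_zero] using ((HasGradAt.const (1 / 2) z).mul partials_N.trace).2
  have grad_H₂ : grad (fun w => 1 / 4 * trace (Q w * ω * (Q w * ω))) z =
      (1 / 2 : ℝ) • fun l => trace (D l * (ω * Q z * ω)) := by
    rw [((HasGradAt.const (1 / 4) z).mul (partials_N.mul partials_N).trace).2]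
    ext l
    have comm : trace (Q z * ω * (D l * ω)) = trace (D l * ω * (Q z * ω)) := trace_mul_comm _ _
    have assoc : D l * ω * (Q z * ω) = D l * (ω * Q z * ω) := by simp only [Matrix.mul_assoc]
    simp only [smul_zero, add_zero, Pi.smul_apply, smul_eq_mul, trace_add, comm, assoc]
    ring
  rw [grad_H₁, grad_H₂, smul_vecMul, smul_vecMul,
    lenard_of_cyclicSum_eq_zero hD hP hQ hPω jacobi compatible]

theorem pbiv_eq_dotProduct : pbiv Q F G z = grad F z ᵥ* Q z ⬝ᵥ grad G z := by
  simp only [pbiv, dotProduct, vecMul, grad, Finset.sum_mul]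
  rw [Finset.sum_comm]
  exact Finset.sum_congr rfl fun j _ => Finset.sum_congr rfl fun i _ => by ring

theorem vecMul_dotProduct_swap {A : Matrix (Fin 4) (Fin 4) ℝ} (hA : Aᵀ = -A) (u v : Fin 4 → ℝ) :
    u ᵥ* A ⬝ᵥ v = -(v ᵥ* A ⬝ᵥ u) := by
  rw [← dotProduct_mulVec, ← vecMul_transpose, hA, dotProduct_comm, vecMul_neg, neg_dotProduct]

theorem pbiv_eq_zero_of_lenard (hP : Pᵀ = -P) (hQ : (Q z)ᵀ = -Q z)
    (lenard : grad F z ᵥ* Q z = grad G z ᵥ* P) :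
    pbiv (fun _ => P) F G z = 0 ∧ pbiv Q F G z = 0 := by
  have self_bracket {A : Matrix (Fin 4) (Fin 4) ℝ} (hA : Aᵀ = -A) (v : Fin 4 → ℝ) :
      v ᵥ* A ⬝ᵥ v = 0 := self_eq_neg.mp (vecMul_dotProduct_swap hA v v)
  constructor
  · rw [pbiv_eq_dotProduct, vecMul_dotProduct_swap hP, ← lenard, self_bracket hQ, neg_zero]
  · rw [pbiv_eq_dotProduct, lenard, self_bracket hP]

end Bivector

section Skew

open Matrix

variable {A B C D E F : (Fin 4 → ℝ) → ℝ} {A' B' C' D' E' F' z : Fin 4 → ℝ}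

theorem skew_transpose (a b c d e f : ℝ) : (skew a b c d e f)ᵀ = -skew a b c d e f := by
  ext i j
  fin_cases i <;> fin_cases j <;> simp [skew]

theorem hasPartialsAt_skew (hA : HasGradAt A A' z) (hB : HasGradAt B B' z)
    (hC : HasGradAt C C' z) (hD : HasGradAt D D' z) (hE : HasGradAt E E' z)
    (hF : HasGradAt F F' z) :
    HasPartialsAt (fun w => skew (A w) (B w) (C w) (D w) (E w) (F w))
      (fun l => skew (A' l) (B' l) (C' l) (D' l) (E' l) (F' l)) z := by
  intro i j
  fin_cases i <;> fin_cases j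
  exacts [.const 0 z, hA, hB, hC, hA.neg, .const 0 z, hD, hE, hB.neg, hD.neg, .const 0 z, hF,
    hC.neg, hE.neg, hF.neg, .const 0 z]

theorem cyclicSum_skew_eq_zero {a b c d e f : ℝ} {A B C D E F : Fin 4 → ℝ}
    (h₀₁₂ : -a * D 1 - b * D 2 - c * D 3 - a * B 0 + d * B 2 + e * B 3
      + b * A 0 + d * A 1 - f * A 3 = 0)
    (h₀₁₃ : -a * E 1 - b * E 2 - c * E 3 - a * C 0 + d * C 2 + e * C 3
      + c * A 0 + e * A 1 + f * A 2 = 0)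
    (h₀₂₃ : -a * F 1 - b * F 2 - c * F 3 - b * C 0 - d * C 1 + f * C 3
      + c * B 0 + e * B 1 + f * B 2 = 0)
    (h₁₂₃ : a * F 0 - d * F 2 - e * F 3 - b * E 0 - d * E 1 + f * E 3
      + c * D 0 + e * D 1 + f * D 2 = 0) (i j k : Fin 4) :
    cyclicSum (skew a b c d e f) (fun l => skew (A l) (B l) (C l) (D l) (E l) (F l)) i j k = 0 := by
  refine eq_zero_of_rotate_of_swap (cyclicSum_rotate _ _)
    (cyclicSum_swap _ fun l => skew_transpose ..) (fun i j k hij hjk => ?_) i j k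
  fin_cases i <;> fin_cases j <;> fin_cases k <;>
    first | exact absurd hij (by decide) | exact absurd hjk (by decide) | skip
  all_goals simp only [cyclicSum, skew, of_apply, cons_val', cons_val, cons_val_zero, cons_val_one,
    cons_val_fin_one, Fin.sum_univ_four, Fin.zero_eta, Fin.mk_one, Fin.reduceFinMk]
  · linear_combination h₀₁₂
  · linear_combination h₀₁₃
  · linear_combination h₀₂₃
  · linear_combination h₁₂₃

theorem Pcan_eq_skew : Pcan = skew 0 1 0 0 1 0 := by
  simp [Pcan, skew]

theorem Pcan_transpose : Pcanᵀ = -Pcan := by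
  rw [Pcan_eq_skew, skew_transpose]

theorem Pcan_mul_inv : Pcan * Pcan⁻¹ = 1 := by
  have h : Pcan * -Pcan = 1 := by
    ext i j
    fin_cases i <;> fin_cases j <;> simp [Pcan]
  rw [inv_eq_right_inv h, h]

theorem pb_eq_pbiv (F G : (Fin 4 → ℝ) → ℝ) (z : Fin 4 → ℝ) :
    pb F G z = pbiv (fun _ => Pcan) F G z := by
  simp only [pb, pbiv, Pcan, of_apply, cons_val', cons_val, cons_val_fin_one, Fin.sum_univ_four]
  ring

end Skew

section NaturalBivector

/-- The function `sin³ θ / cos θ` by which `Λ₁₂` depends on `θ`, written through `tan θ` so that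
its derivatives are rational functions of `tan θ`. -/
noncomputable def weight (θ : ℝ) : ℝ := tan θ ^ 3 / (1 + tan θ ^ 2)

/-- The derivative of `weight`, in terms of `tan θ`. -/
noncomputable def weightDeriv (θ : ℝ) : ℝ := tan θ ^ 2 * (3 + tan θ ^ 2) / (1 + tan θ ^ 2)

/-- The second derivative of `weight`, in terms of `tan θ`. -/
noncomputable def weightDeriv₂ (θ : ℝ) : ℝ :=
  (2 * tan θ ^ 5 + 4 * tan θ ^ 3 + 6 * tan θ) / (1 + tan θ ^ 2)

/-- The potential `Λ₁₂` with an arbitrary dependence `g` on `φ`. -/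
noncomputable def natLam12 (g : ℝ → ℝ) (z : Fin 4 → ℝ) : ℝ :=
  g (z 0) * weight (z 1)

/-- The potential `Λ₂₁` for arbitrary functions `f`, `g` of `φ`; `f'` stands for the derivative
of `f`. -/
noncomputable def natLam21 (f' g : ℝ → ℝ) (z : Fin 4 → ℝ) : ℝ :=
  1 / 2 * f' (z 0) * tan (z 1) - g (z 0) * weight (z 1)

/-- The potential `Λ₂₂` for arbitrary functions `f`, `g` of `φ`; `g'` stands for the derivative
of `g`. -/
noncomputable def natLam22 (a : ℝ) (f g' : ℝ → ℝ) (z : Fin 4 → ℝ) : ℝ :=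
  f (z 0) * (1 + tan (z 1) ^ 2) + 1 / 2 * g' (z 0) * weightDeriv (z 1) + a * tan (z 1) ^ 2

/-- The bivector `π′` for arbitrary functions `f`, `g` of `φ` with derivatives `f'`, `g'`. The
function `x₂₂` cancels from `{φ,θ}`, and the partial derivatives in `{p_φ,p_θ}` are carried out. -/
noncomputable def naturalBivector (a : ℝ) (f f' g g' : ℝ → ℝ) (z : Fin 4 → ℝ) :
    Matrix (Fin 4) (Fin 4) ℝ :=
  skew
    (tan (z 1) * z 2)
    (z 2 ^ 2 + f (z 0))
    ((1 + tan (z 1) ^ 2) * z 2 * z 3 + natLam12 g z)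
    (natLam21 f' g z)
    ((1 + tan (z 1) ^ 2) * z 2 ^ 2 + z 3 ^ 2 + natLam22 a f g' z)
    ((g (z 0) * weightDeriv (z 1) - 1 / 2 * f' (z 0) * (1 + tan (z 1) ^ 2)) * z 3
      - g' (z 0) * weight (z 1) * z 2)

/-- The functions `f`, `g` of `φ` have the derivatives at `φ` that enter `π′` and its first
partial derivatives; `g` solves `g'' = -4 g`. -/
structure IsPotentialPairAt (f f' f'' g g' : ℝ → ℝ) (φ : ℝ) : Prop where
  hasDerivAt_f : HasDerivAt f (f' φ) φ
  hasDerivAt_f' : HasDerivAt f' (f'' φ) φ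
  hasDerivAt_g : HasDerivAt g (g' φ) φ
  hasDerivAt_g' : HasDerivAt g' (-4 * g φ) φ

theorem one_add_tan_sq_ne_zero (θ : ℝ) : 1 + tan θ ^ 2 ≠ 0 := by positivity

theorem hasDerivAt_tan_one_add_sq {θ : ℝ} (hθ : cos θ ≠ 0) :
    HasDerivAt tan (1 + tan θ ^ 2) θ :=
  (hasDerivAt_tan hθ).congr_deriv <| by rw [← inv_one_add_tan_sq hθ, one_div, inv_inv]

theorem hasDerivAt_weight {θ : ℝ} (hθ : cos θ ≠ 0) : HasDerivAt weight (weightDeriv θ) θ := by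
  have h_tan := hasDerivAt_tan_one_add_sq hθ
  have hne := one_add_tan_sq_ne_zero θ
  refine ((h_tan.fun_pow 3).fun_div ((h_tan.fun_pow 2).const_add 1) hne).congr_deriv ?_
  simp only [weightDeriv]
  field_simp
  ring

theorem hasDerivAt_weightDeriv {θ : ℝ} (hθ : cos θ ≠ 0) :
    HasDerivAt weightDeriv (weightDeriv₂ θ) θ := by
  have h_tan := hasDerivAt_tan_one_add_sq hθ
  have hne := one_add_tan_sq_ne_zero θ
  refine (((h_tan.fun_pow 2).fun_mul ((h_tan.fun_pow 2).const_add 3)).fun_div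
    ((h_tan.fun_pow 2).const_add 1) hne).congr_deriv ?_
  simp only [weightDeriv₂]
  field_simp
  ring

theorem hasGradAt_one_add_tan_sq {z : Fin 4 → ℝ} (hθ : cos (z 1) ≠ 0) :
    HasGradAt (fun w => 1 + tan (w 1) ^ 2)
      (Pi.single 1 (2 * tan (z 1) * (1 + tan (z 1) ^ 2))) z :=
  .comp_coord 1 <| (((hasDerivAt_tan_one_add_sq hθ).fun_pow 2).const_add 1).congr_deriv <| by
    norm_num

variable {a : ℝ} {f f' f'' g g' : ℝ → ℝ} {z : Fin 4 → ℝ}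

theorem hasGradAt_natLam12 (hg : HasDerivAt g (g' (z 0)) (z 0)) (hθ : cos (z 1) ≠ 0) :
    HasGradAt (natLam12 g)
      ![g' (z 0) * weight (z 1), g (z 0) * weightDeriv (z 1), 0, 0] z := by
  refine ((HasGradAt.comp_coord 0 hg).mul
    (.comp_coord 1 (hasDerivAt_weight hθ))).congr_grad ?_
  ext i
  fin_cases i <;> simp [mul_comm]

theorem hasGradAt_natLam21 (hf' : HasDerivAt f' (f'' (z 0)) (z 0))
    (hg : HasDerivAt g (g' (z 0)) (z 0)) (hθ : cos (z 1) ≠ 0) :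
    HasGradAt (natLam21 f' g)
      ![1 / 2 * f'' (z 0) * tan (z 1) - g' (z 0) * weight (z 1),
        1 / 2 * f' (z 0) * (1 + tan (z 1) ^ 2) - g (z 0) * weightDeriv (z 1), 0, 0] z := by
  refine (((HasGradAt.comp_coord 0 (hf'.const_mul (1 / 2))).mul
    (.comp_coord 1 (hasDerivAt_tan_one_add_sq hθ))).sub
    (hasGradAt_natLam12 hg hθ)).congr_grad ?_
  ext i
  fin_cases i <;> simp [mul_comm]

theorem hasGradAt_natLam22 (hf : HasDerivAt f (f' (z 0)) (z 0))
    (hg' : HasDerivAt g' (-4 * g (z 0)) (z 0)) (hθ : cos (z 1) ≠ 0) :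
    HasGradAt (natLam22 a f g')
      ![f' (z 0) * (1 + tan (z 1) ^ 2) - 2 * g (z 0) * weightDeriv (z 1),
        2 * tan (z 1) * (1 + tan (z 1) ^ 2) * (f (z 0) + a)
          + 1 / 2 * g' (z 0) * weightDeriv₂ (z 1), 0, 0] z := by
  have h_sq := (hasDerivAt_tan_one_add_sq hθ).fun_pow 2
  refine ((((HasGradAt.comp_coord 0 hf).mul (hasGradAt_one_add_tan_sq hθ)).add
    ((HasGradAt.comp_coord 0 (hg'.const_mul (1 / 2))).mul
      (.comp_coord 1 (hasDerivAt_weightDeriv hθ)))).add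
    (.comp_coord 1 (h_sq.const_mul a))).congr_grad ?_
  ext i
  fin_cases i <;>
    simp only [Fin.zero_eta, Fin.mk_one, Fin.reduceFinMk, Pi.add_apply, Pi.smul_apply,
      smul_eq_mul, Pi.single_apply, Fin.reduceEq, reduceIte, Matrix.cons_val, Nat.cast_ofNat] <;>
    ring

/-- The matrices of first partial derivatives of `naturalBivector`. -/
noncomputable def naturalPartials (a : ℝ) (f f' f'' g g' : ℝ → ℝ) (z : Fin 4 → ℝ) (l : Fin 4) :
    Matrix (Fin 4) (Fin 4) ℝ :=
  let s := 1 + tan (z 1) ^ 2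
  let s' := 2 * tan (z 1) * s
  skew
    (![0, s * z 2, tan (z 1), 0] l)
    (![f' (z 0), 0, 2 * z 2, 0] l)
    (![g' (z 0) * weight (z 1), s' * z 2 * z 3 + g (z 0) * weightDeriv (z 1),
      s * z 3, s * z 2] l)
    (![1 / 2 * f'' (z 0) * tan (z 1) - g' (z 0) * weight (z 1),
      1 / 2 * f' (z 0) * s - g (z 0) * weightDeriv (z 1), 0, 0] l)
    (![f' (z 0) * s - 2 * g (z 0) * weightDeriv (z 1),
      s' * z 2 ^ 2 + s' * (f (z 0) + a) + 1 / 2 * g' (z 0) * weightDeriv₂ (z 1),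
      2 * s * z 2, 2 * z 3] l)
    (![4 * g (z 0) * weight (z 1) * z 2
        + (g' (z 0) * weightDeriv (z 1) - 1 / 2 * f'' (z 0) * s) * z 3,
      (g (z 0) * weightDeriv₂ (z 1) - 1 / 2 * f' (z 0) * s') * z 3
        - g' (z 0) * weightDeriv (z 1) * z 2,
      -(g' (z 0) * weight (z 1)),
      g (z 0) * weightDeriv (z 1) - 1 / 2 * f' (z 0) * s] l)

theorem hasPartialsAt_naturalBivector (h : IsPotentialPairAt f f' f'' g g' (z 0))
    (hθ : cos (z 1) ≠ 0) :
    HasPartialsAt (naturalBivector a f f' g g') (naturalPartials a f f' f'' g g' z) z := by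
  have tan_grad := HasGradAt.comp_coord 1 (hasDerivAt_tan_one_add_sq hθ)
  have sec_sq_grad := hasGradAt_one_add_tan_sq hθ
  have p_grad := HasGradAt.coord 2 z
  have q_grad := HasGradAt.coord 3 z
  have p_sq_grad := HasGradAt.comp_coord 2 (hasDerivAt_pow 2 (z 2))
  have q_sq_grad := HasGradAt.comp_coord 3 (hasDerivAt_pow 2 (z 3))
  refine hasPartialsAt_skew ((tan_grad.mul p_grad).congr_grad ?_)
    ((p_sq_grad.add (.comp_coord 0 h.hasDerivAt_f)).congr_grad ?_)
    ((((sec_sq_grad.mul p_grad).mul q_grad).add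
      (hasGradAt_natLam12 h.hasDerivAt_g hθ)).congr_grad ?_)
    (hasGradAt_natLam21 h.hasDerivAt_f' h.hasDerivAt_g hθ)
    ((((sec_sq_grad.mul p_sq_grad).add q_sq_grad).add
      (hasGradAt_natLam22 h.hasDerivAt_f h.hasDerivAt_g' hθ)).congr_grad ?_)
    (((((HasGradAt.comp_coord 0 h.hasDerivAt_g).mul
        (.comp_coord 1 (hasDerivAt_weightDeriv hθ))).sub
        ((HasGradAt.comp_coord 0 (h.hasDerivAt_f'.const_mul (1 / 2))).mul sec_sq_grad)).mul
        q_grad).sub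
      (((HasGradAt.comp_coord 0 h.hasDerivAt_g').mul
        (.comp_coord 1 (hasDerivAt_weight hθ))).mul p_grad) |>.congr_grad ?_)
  all_goals
    ext i
    fin_cases i <;>
      simp only [Fin.zero_eta, Fin.mk_one, Fin.reduceFinMk, Pi.add_apply, Pi.sub_apply,
        Pi.smul_apply, smul_eq_mul, Pi.single_apply, Fin.reduceEq, reduceIte, Matrix.cons_val,
        Nat.cast_ofNat] <;>
      ring

theorem cyclicSum_naturalPartials_eq_zero
    (ode : g (z 0) * (12 * g' (z 0) - f'' (z 0) + 8 * (f (z 0) + a)) = 3 * f' (z 0) * g' (z 0))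
    (i j k : Fin 4) :
    cyclicSum (naturalBivector a f f' g g' z) (naturalPartials a f f' f'' g g' z) i j k = 0 := by
  have hne := one_add_tan_sq_ne_zero (z 1)
  refine cyclicSum_skew_eq_zero ?_ ?_ ?_ ?_ i j k
  all_goals simp only [natLam12, natLam21, natLam22, weight, weightDeriv, weightDeriv₂,
    Matrix.cons_val]
  · field_simp
    ring
  · field_simp
    ring
  · field_simp
    ring
  · linear_combination (norm := (field_simp; ring))
      (-1 / 2 * (tan (z 1) ^ 4 / (1 + tan (z 1) ^ 2))) * ode

theorem cyclicSum_Pcan_naturalPartials_eq_zero (i j k : Fin 4) :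
    cyclicSum Pcan (naturalPartials a f f' f'' g g' z) i j k = 0 := by
  rw [Pcan_eq_skew]
  refine cyclicSum_skew_eq_zero ?_ ?_ ?_ ?_ i j k
  all_goals simp only [Matrix.cons_val]
  all_goals ring

end NaturalBivector

section ConcretePotentials

variable {a b c d : ℝ} {φ θ : ℝ}

/-- The partial fraction form of `fpot`. -/
noncomputable def fpotReduced (a b c d φ : ℝ) : ℝ :=
  (a + b + c - 2 * d) * (1 / sin φ ^ 2) + c * (1 / cos φ ^ 2) - 2 * d * cos (2 * φ) - a

/-- The derivative of `fpotReduced`. -/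
noncomputable def fpotReducedDeriv (a b c d φ : ℝ) : ℝ :=
  (a + b + c - 2 * d) * (-2 * cos φ / sin φ ^ 3) + c * (2 * sin φ / cos φ ^ 3)
    + 4 * d * sin (2 * φ)

/-- The second derivative of `fpotReduced`. -/
noncomputable def fpotReducedDeriv₂ (a b c d φ : ℝ) : ℝ :=
  (a + b + c - 2 * d) * (2 / sin φ ^ 2 + 6 * cos φ ^ 2 / sin φ ^ 4)
    + c * (2 / cos φ ^ 2 + 6 * sin φ ^ 2 / cos φ ^ 4) + 8 * d * cos (2 * φ)

/-- The factor of `gpot` that depends on `φ`. -/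
noncomputable def gpotFactor (d φ : ℝ) : ℝ := 2 * d * sin (2 * φ)

/-- The derivative of `gpotFactor`. -/
noncomputable def gpotFactorDeriv (d φ : ℝ) : ℝ := 4 * d * cos (2 * φ)

theorem fpot_eq_fpotReduced (hs : sin φ ≠ 0) (hc : cos φ ≠ 0) :
    fpot a b c d φ = fpotReduced a b c d φ := by
  have cos_sq : cos φ ^ 2 = 1 - sin φ ^ 2 := cos_sq' φ
  have one_sub_ne : 1 - sin φ ^ 2 ≠ 0 := cos_sq ▸ pow_ne_zero 2 hc
  rw [fpot, fpotReduced, div_pow, cos_two_mul, cos_sq]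
  field_simp
  ring

theorem gpot_eq_mul_weight (hθ : cos θ ≠ 0) :
    gpot d φ θ = gpotFactor d φ * weight θ := by
  have weight_eq : weight θ = sin θ ^ 3 / cos θ := by
    rw [weight, div_eq_mul_inv, inv_one_add_tan_sq hθ, tan_eq_sin_div_cos]
    field_simp
  rw [gpot, gpotFactor, weight_eq]
  ring

theorem hasDerivAt_cos_two_mul (φ : ℝ) :
    HasDerivAt (fun x => cos (2 * x)) (-2 * sin (2 * φ)) φ :=
  ((hasDerivAt_id φ).const_mul 2).cos.congr_deriv <| by simp only [id]; ring

theorem hasDerivAt_sin_two_mul (φ : ℝ) :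
    HasDerivAt (fun x => sin (2 * x)) (2 * cos (2 * φ)) φ :=
  ((hasDerivAt_id φ).const_mul 2).sin.congr_deriv <| by simp only [id]; ring

theorem hasDerivAt_fpotReduced (hs : sin φ ≠ 0) (hc : cos φ ≠ 0) :
    HasDerivAt (fpotReduced a b c d) (fpotReducedDeriv a b c d φ) φ := by
  have h_sin := (hasDerivAt_const φ (1 : ℝ)).fun_div ((hasDerivAt_sin φ).fun_pow 2)
    (pow_ne_zero 2 hs)
  have h_cos := (hasDerivAt_const φ (1 : ℝ)).fun_div ((hasDerivAt_cos φ).fun_pow 2)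
    (pow_ne_zero 2 hc)
  refine ((((h_sin.const_mul (a + b + c - 2 * d)).add (h_cos.const_mul c)).sub
    ((hasDerivAt_cos_two_mul φ).const_mul (2 * d))).sub_const a).congr_deriv ?_
  rw [fpotReducedDeriv]
  field_simp
  ring

theorem hasDerivAt_fpotReducedDeriv (hs : sin φ ≠ 0) (hc : cos φ ≠ 0) :
    HasDerivAt (fpotReducedDeriv a b c d) (fpotReducedDeriv₂ a b c d φ) φ := by
  have h_sin := ((hasDerivAt_cos φ).const_mul (-2)).fun_div ((hasDerivAt_sin φ).fun_pow 3)
    (pow_ne_zero 3 hs)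
  have h_cos := ((hasDerivAt_sin φ).const_mul 2).fun_div ((hasDerivAt_cos φ).fun_pow 3)
    (pow_ne_zero 3 hc)
  refine (((h_sin.const_mul (a + b + c - 2 * d)).add (h_cos.const_mul c)).add
    ((hasDerivAt_sin_two_mul φ).const_mul (4 * d))).congr_deriv ?_
  rw [fpotReducedDeriv₂]
  field_simp
  ring

theorem deriv_fpot {φ : ℝ} (hs : sin φ ≠ 0) (hc : cos φ ≠ 0) :
    deriv (fpot a b c d) φ = fpotReducedDeriv a b c d φ := by
  have h_eq : fpot a b c d =ᶠ[nhds φ] fpotReduced a b c d := by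
    filter_upwards [continuous_sin.continuousAt.eventually_ne hs,
      continuous_cos.continuousAt.eventually_ne hc] with x hsx hcx
    exact fpot_eq_fpotReduced hsx hcx
  rw [h_eq.deriv_eq, (hasDerivAt_fpotReduced hs hc).deriv]

theorem isPotentialPairAt_fpotReduced (hs : sin φ ≠ 0) (hc : cos φ ≠ 0) :
    IsPotentialPairAt (fpotReduced a b c d) (fpotReducedDeriv a b c d) (fpotReducedDeriv₂ a b c d)
      (gpotFactor d) (gpotFactorDeriv d) φ where
  hasDerivAt_f := hasDerivAt_fpotReduced hs hc
  hasDerivAt_f' := hasDerivAt_fpotReducedDeriv hs hc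
  hasDerivAt_g := ((hasDerivAt_sin_two_mul φ).const_mul (2 * d)).congr_deriv <| by
    rw [gpotFactorDeriv]; ring
  hasDerivAt_g' := ((hasDerivAt_cos_two_mul φ).const_mul (4 * d)).congr_deriv <| by
    rw [gpotFactor]; ring

theorem fpotReduced_ode (hs : sin φ ≠ 0) (hc : cos φ ≠ 0) :
    gpotFactor d φ * (12 * gpotFactorDeriv d φ - fpotReducedDeriv₂ a b c d φ
        + 8 * (fpotReduced a b c d φ + a)) =
      3 * fpotReducedDeriv a b c d φ * gpotFactorDeriv d φ := by
  simp only [gpotFactor, gpotFactorDeriv, fpotReduced, fpotReducedDeriv, fpotReducedDeriv₂,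
    cos_two_mul', sin_two_mul]
  field_simp
  ring

end ConcretePotentials

section ConcreteBivector

variable {a b c d : ℝ} {x22 : ℝ → ℝ} {z : Fin 4 → ℝ}

/-- The open set of phase space on which `π′` is defined by nonsingular expressions. -/
def regularDomain : Set (Fin 4 → ℝ) :=
  {z | sin (z 0) * cos (z 0) * sin (z 1) * cos (z 1) ≠ 0}

theorem isOpen_regularDomain : IsOpen regularDomain :=
  isOpen_ne_fun (by fun_prop) continuous_const

theorem mem_regularDomain_iff :
    z ∈ regularDomain ↔ sin (z 0) ≠ 0 ∧ cos (z 0) ≠ 0 ∧ sin (z 1) ≠ 0 ∧ cos (z 1) ≠ 0 := by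
  simp [regularDomain, and_assoc]

theorem La12_eqOn : Set.EqOn (La12 d) (natLam12 (gpotFactor d)) regularDomain := by
  intro z hz
  obtain ⟨-, -, -, hcθ⟩ := mem_regularDomain_iff.mp hz
  exact gpot_eq_mul_weight hcθ

theorem La11_eqOn : Set.EqOn (La11 a b c d) (fun z => fpotReduced a b c d (z 0)) regularDomain := by
  intro z hz
  obtain ⟨hs, hc, -, -⟩ := mem_regularDomain_iff.mp hz
  exact fpot_eq_fpotReduced hs hc

theorem La21_eqOn :
    Set.EqOn (La21 a b c d) (natLam21 (fpotReducedDeriv a b c d) (gpotFactor d)) regularDomain := by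
  intro z hz
  obtain ⟨hs, hc, -, hcθ⟩ := mem_regularDomain_iff.mp hz
  rw [La21, natLam21, deriv_fpot hs hc, gpot_eq_mul_weight hcθ, tan_eq_sin_div_cos]
  ring

theorem La22_eqOn :
    Set.EqOn (La22 a b c d) (natLam22 a (fpotReduced a b c d) (gpotFactorDeriv d))
      regularDomain := by
  intro z hz
  obtain ⟨hs, hc, -, hcθ⟩ := mem_regularDomain_iff.mp hz
  have sec_sq : 1 + tan (z 1) ^ 2 = 1 / cos (z 1) ^ 2 := by
    rw [← inv_one_add_tan_sq hcθ, one_div, inv_inv]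
  have weightDeriv_eq :
      weightDeriv (z 1) = tan (z 1) ^ 2 * (2 * cos (z 1) ^ 2 + 1) := by
    have h_cos_sq := inv_one_add_tan_sq hcθ
    have hne := one_add_tan_sq_ne_zero (z 1)
    rw [weightDeriv, ← h_cos_sq]
    field_simp
    ring
  rw [La22, natLam22, gpot, fpot_eq_fpotReduced hs hc, weightDeriv_eq, gpotFactorDeriv, sec_sq,
    tan_eq_sin_div_cos, sin_two_mul (z 1)]
  have hs2 : sin (2 * z 0) ≠ 0 := by simp [sin_two_mul, hs, hc]
  field_simp
  ring

theorem pd_Pi12 (hθ : cos (z 1) ≠ 0) : pd 3 Pi12 z = (1 + tan (z 1) ^ 2) * z 2 := by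
  refine ((((hasGradAt_one_add_tan_sq hθ).mul (.coord 2 z)).mul (.coord 3 z)).pd_eq 3).trans ?_
  simp

theorem pd_Pi22 (hθ : cos (z 1) ≠ 0) : pd 2 Pi22 z = 2 * (1 + tan (z 1) ^ 2) * z 2 := by
  refine ((((hasGradAt_one_add_tan_sq hθ).mul (.comp_coord 2 (hasDerivAt_pow 2 (z 2)))).add
    (.comp_coord 3 (hasDerivAt_pow 2 (z 3)))).pd_eq 2).trans ?_
  simp only [Pi.add_apply, Pi.smul_apply, smul_eq_mul, Pi.single_apply, Fin.reduceEq, reduceIte,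
    Nat.cast_ofNat]
  ring

theorem piNew_eqOn :
    Set.EqOn (piNew a b c d x22) (naturalBivector a (fpotReduced a b c d) (fpotReducedDeriv a b c d)
      (gpotFactor d) (gpotFactorDeriv d)) regularDomain := by
  intro z hz
  obtain ⟨hs, hc, -, hcθ⟩ := mem_regularDomain_iff.mp hz
  have h := isPotentialPairAt_fpotReduced (a := a) (b := b) (c := c) (d := d) hs hc
  have hU := isOpen_regularDomain.mem_nhds hz
  have pd_La11 := ((HasGradAt.comp_coord 0 h.hasDerivAt_f).congr_of_eventuallyEq
    (La11_eqOn.eventuallyEq_of_mem hU)).pd_eq 1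
  have pd_La12 := ((hasGradAt_natLam12 h.hasDerivAt_g hcθ).congr_of_eventuallyEq
    (La12_eqOn.eventuallyEq_of_mem hU)).pd_eq 0
  have pd_La21 := ((hasGradAt_natLam21 h.hasDerivAt_f' h.hasDerivAt_g hcθ).congr_of_eventuallyEq
    (La21_eqOn.eventuallyEq_of_mem hU)).pd_eq 1
  have pd_La22 := ((hasGradAt_natLam22 h.hasDerivAt_f h.hasDerivAt_g' hcθ).congr_of_eventuallyEq
    (La22_eqOn.eventuallyEq_of_mem hU)).pd_eq 0
  have tan_eq : tan (z 1) = cos (z 1) * sin (z 1) * (1 + tan (z 1) ^ 2) := by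
    rw [← inv_inv (1 + tan (z 1) ^ 2), inv_one_add_tan_sq hcθ, tan_eq_sin_div_cos]
    field_simp
  rw [piNew, naturalBivector, La11_eqOn hz, La12_eqOn hz, La21_eqOn hz, La22_eqOn hz, pd_La11,
    pd_La12, pd_La21, pd_La22, pd_Pi12 hcθ, pd_Pi22 hcθ]
  congr 1
  · rw [y12]
    linear_combination (-z 2) * tan_eq
  · rw [Pi21, zero_add]
  · simp only [Pi.single_apply, Fin.reduceEq, reduceIte, Matrix.cons_val]
    ring

end ConcreteBivector

section PoissonPair

variable {a b c d : ℝ} {x22 : ℝ → ℝ} {z : Fin 4 → ℝ}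

/-- The matrices of first partial derivatives of `π′` on `regularDomain`. -/
noncomputable abbrev piNewPartials (a b c d : ℝ) (z : Fin 4 → ℝ) :
    Fin 4 → Matrix (Fin 4) (Fin 4) ℝ :=
  naturalPartials a (fpotReduced a b c d) (fpotReducedDeriv a b c d) (fpotReducedDeriv₂ a b c d)
    (gpotFactor d) (gpotFactorDeriv d) z

theorem hasPartialsAt_piNew (hz : z ∈ regularDomain) :
    HasPartialsAt (piNew a b c d x22) (piNewPartials a b c d z) z := by
  obtain ⟨hs, hc, -, hcθ⟩ := mem_regularDomain_iff.mp hz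
  exact (hasPartialsAt_naturalBivector (isPotentialPairAt_fpotReduced hs hc) hcθ)
    |>.congr_of_eventuallyEq
      (piNew_eqOn.eventuallyEq_of_mem (isOpen_regularDomain.mem_nhds hz))

theorem cyclicSum_piNew_eq_zero (hz : z ∈ regularDomain) (i j k : Fin 4) :
    cyclicSum (piNew a b c d x22 z) (piNewPartials a b c d z) i j k = 0 := by
  obtain ⟨hs, hc, -, -⟩ := mem_regularDomain_iff.mp hz
  rw [piNew_eqOn hz]
  exact cyclicSum_naturalPartials_eq_zero (fpotReduced_ode hs hc) i j k

theorem isPoissonOn_piNew : IsPoissonOn (piNew a b c d x22) regularDomain :=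
  (isPoissonOn_iff fun _ => hasPartialsAt_piNew).mpr fun _ => cyclicSum_piNew_eq_zero

theorem isPoissonOn_Pcan_add_piNew :
    IsPoissonOn (fun z => Pcan + piNew a b c d x22 z) regularDomain := by
  refine (isPoissonOn_iff fun z hz => (HasPartialsAt.const Pcan z).add
    (hasPartialsAt_piNew hz)).mpr fun z hz i j k => ?_
  rw [zero_add, cyclicSum_add_left, cyclicSum_Pcan_naturalPartials_eq_zero,
    cyclicSum_piNew_eq_zero hz, add_zero]

theorem lenard_Hcal (hz : z ∈ regularDomain) :
    Matrix.vecMul (grad (Hcal1 a b c d x22) z) (piNew a b c d x22 z) =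
      Matrix.vecMul (grad (Hcal2 a b c d x22) z) Pcan :=
  lenard_relation Pcan_mul_inv Pcan_transpose (skew_transpose ..) (hasPartialsAt_piNew hz)
    (fun _ => skew_transpose ..) (cyclicSum_piNew_eq_zero hz) cyclicSum_Pcan_naturalPartials_eq_zero

end PoissonPair

theorem statement19_general (a b c d : ℝ) (x22 : ℝ → ℝ) :
    (IsPoissonOn (piNew a b c d x22)
      {z | sin (z 0) * cos (z 0) * sin (z 1) * cos (z 1) ≠ 0} ∧
    IsPoissonOn (fun z => Pcan + piNew a b c d x22 z)
      {z | sin (z 0) * cos (z 0) * sin (z 1) * cos (z 1) ≠ 0}) ∧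
    ∀ z : Fin 4 → ℝ, sin (z 0) * cos (z 0) * sin (z 1) * cos (z 1) ≠ 0 →
      pb (Hcal1 a b c d x22) (Hcal2 a b c d x22) z = 0 ∧
      pbiv (piNew a b c d x22) (Hcal1 a b c d x22) (Hcal2 a b c d x22) z = 0 := by
  refine ⟨⟨isPoissonOn_piNew, isPoissonOn_Pcan_add_piNew⟩, fun z hz => ?_⟩
  rw [pb_eq_pbiv]
  exact pbiv_eq_zero_of_lenard Pcan_transpose (skew_transpose ..) (lenard_Hcal hz)

theorem statement19 (a b c d : ℝ) (x22 : ℝ → ℝ) (hx22 : ContDiff ℝ (⊤ : ℕ∞) x22) :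
    (IsPoissonOn (piNew a b c d x22)
      {z | sin (z 0) * cos (z 0) * sin (z 1) * cos (z 1) ≠ 0} ∧
    IsPoissonOn (fun z => Pcan + piNew a b c d x22 z)
      {z | sin (z 0) * cos (z 0) * sin (z 1) * cos (z 1) ≠ 0}) ∧
    ∀ z : Fin 4 → ℝ, sin (z 0) * cos (z 0) * sin (z 1) * cos (z 1) ≠ 0 →
      pb (Hcal1 a b c d x22) (Hcal2 a b c d x22) z = 0 ∧
      pbiv (piNew a b c d x22) (Hcal1 a b c d x22) (Hcal2 a b c d x22) z = 0 := by
  exact statement19_general a b c d x22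
end
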